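/- Let N, K, d_s be integers with N ≥ 1, K > N + d_s ≥ N, d_s ≥ 0, and suppose α = (K−N−d_s)/2 is a nonnegative integer. Let v[n] = 1/√N for 0 ≤ n ≤ N−1 and v[n] = 0 otherwise. Let w_r : ℤ → ℂ be any sequence with w_r[n] = 1/√N for −N−d_s+1 ≤ n ≤ 0, w_r[n] arbitrary for −K+α+1 ≤ n ≤ −N−d_s and for 1 ≤ n ≤ α, and w_r[n] = 0 elsewhere. Then for every integer x with 0 ≤ x ≤ d_s and every integer y, the crossambiguity function satisfies A_{v,w_r}(x,y) = (1/N)·∑_{n=x}^{x+N−1} exp(2πi yn/N); in particular this value does not depend on the roll-off values of w_r outside {−N−d_s+1,…,0}. -/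

import Mathlib

open Complex

/-- The crossambiguity function
`A_{v,w}(x,y) = ∑_{n∈ℤ} v[n−x]·w[−n]·exp(2πi y n/N)`. -/
noncomputable def crossamb (N : ℕ) (v w : ℤ → ℂ) (x y : ℤ) : ℂ :=
  ∑' n : ℤ, v (n - x) * w (-n) * Complex.exp (2 * Real.pi * Complex.I * (y : ℂ) * (n : ℂ) / N)

section

variable {N : ℕ} {v w : ℤ → ℂ} {x y : ℤ}

theorem crossamb_eq_sum {s : Finset ℤ} (hv : ∀ n ∉ s, v (n - x) = 0) :
    crossamb N v w x y =
      ∑ n ∈ s, v (n - x) * w (-n) * exp (2 * Real.pi * I * (y : ℂ) * (n : ℂ) / N) :=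
  tsum_eq_sum fun n hn => by rw [hv n hn, zero_mul, zero_mul]

theorem crossamb_eq_mul_sum_exp {s : Finset ℤ} {c : ℂ} (hv : ∀ n ∉ s, v (n - x) = 0)
    (hvw : ∀ n ∈ s, v (n - x) * w (-n) = c) :
    crossamb N v w x y = c * ∑ n ∈ s, exp (2 * Real.pi * I * (y : ℂ) * (n : ℂ) / N) := by
  rw [crossamb_eq_sum hv, Finset.mul_sum]
  exact Finset.sum_congr rfl fun n hn => by rw [hvw n hn]

theorem stmt12_general {L : ℤ} {c d : ℂ}
    (hv : ∀ n : ℤ, v n = if 0 ≤ n ∧ n ≤ L - 1 then c else 0)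
    (hw : ∀ n : ℤ, x ≤ n → n ≤ x + L - 1 → w (-n) = d) :
    crossamb N v w x y =
      c * d * ∑ n ∈ Finset.Icc x (x + L - 1),
        exp (2 * Real.pi * I * (y : ℂ) * (n : ℂ) / N) := by
  have mem_window (n : ℤ) : n ∈ Finset.Icc x (x + L - 1) ↔ 0 ≤ n - x ∧ n - x ≤ L - 1 := by
    rw [Finset.mem_Icc]
    lia
  apply crossamb_eq_mul_sum_exp
  · intro n hn
    rw [hv, if_neg (mt (mem_window n).mpr hn)]
  · intro n hn
    obtain ⟨hxn, hnL⟩ := Finset.mem_Icc.mp hn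
    rw [hv, if_pos ((mem_window n).mp hn), hw n hxn hnL]

end

theorem ofReal_one_div_sqrt_mul_self {a : ℝ} (ha : 0 ≤ a) :
    ((1 / √a : ℝ) : ℂ) * ((1 / √a : ℝ) : ℂ) = 1 / (a : ℂ) := by
  rw [← ofReal_mul, one_div_mul_one_div, Real.mul_self_sqrt ha, ofReal_div, ofReal_one]

/-- Let `N ≥ 1`, `d_s ≥ 0`, `K > N + d_s`, and let
`α = (K−N−d_s)/2` be a nonnegative integer.  Let `v[n] = 1/√N` for
`0 ≤ n ≤ N−1` (`0` otherwise), and let `w_r : ℤ → ℂ` be any sequence with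
`w_r[n] = 1/√N` for `−N−d_s+1 ≤ n ≤ 0`, arbitrary values on the roll-off
regions `−K+α+1 ≤ n ≤ −N−d_s` and `1 ≤ n ≤ α`, and `w_r[n] = 0` elsewhere.
Then for every integer `x` with `0 ≤ x ≤ d_s` and every integer `y`,
`A_{v,w_r}(x,y) = (1/N)·∑_{n=x}^{x+N−1} exp(2πi y n/N)`; in particular, this
value does not depend on the roll-off values of `w_r`. -/
theorem stmt12
    (N : ℕ) (K ds α : ℤ) (hN : 0 < N)
    (hds : 0 ≤ ds) (hK : (N : ℤ) + ds < K)
    (hα : 2 * α = K - (N : ℤ) - ds) (hα0 : 0 ≤ α)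
    (v : ℤ → ℂ)
    (hv : ∀ n : ℤ, v n = if 0 ≤ n ∧ n ≤ (N : ℤ) - 1 then ((1 / Real.sqrt N : ℝ) : ℂ) else 0)
    (wr : ℤ → ℂ)
    (hwr1 : ∀ n : ℤ, -(N : ℤ) - ds + 1 ≤ n → n ≤ 0 → wr n = ((1 / Real.sqrt N : ℝ) : ℂ))
    (hwr0 : ∀ n : ℤ, (n ≤ -K + α ∨ α + 1 ≤ n) → wr n = 0) :
    ∀ x y : ℤ, 0 ≤ x → x ≤ ds →
      crossamb N v wr x y =
        (1 / (N : ℂ)) *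
          ∑ n ∈ Finset.Icc x (x + (N : ℤ) - 1),
            Complex.exp (2 * Real.pi * Complex.I * (y : ℂ) * (n : ℂ) / N) := by
  intro x y hx0 hxds
  -- For `0 ≤ x ≤ ds` the reflected window `[-(x + N - 1), -x]` lies inside the plateau of `wr`.
  rw [stmt12_general hv fun n hxn hnN => hwr1 (-n) (by lia) (by lia),
    ofReal_one_div_sqrt_mul_self N.cast_nonneg, ofReal_natCast]
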